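/- For the shifted Gaussian f_{T,c}(x₁) = exp(πi x₁ᵗTx₁ + 2πi cᵗx₁) with c ∈ ℂⁿ, the L² inner product with its Heisenberg translate satisfies ⟨f_{T,c}, π_h f_{T,c}⟩ = (2ⁿ det(Im T))^{-1/2} · exp(−(π/2)H_c(h̲,h̲)), where H_c(h̲,h̲) = (h̲ − 2i Im c)ᵗ(Im T)^{-1}(h̲* − 2i Im c) + 4i h₁ᵗ(Re c). -/

import Mathlib

open Real Complex Matrix MeasureTheory

noncomputable section

def cvec {n : ℕ} (v : Fin n → ℝ) : Fin n → ℂ := fun i => (v i : ℂ)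

def uVec {n : ℕ} (T : Matrix (Fin n) (Fin n) ℂ) (h : (Fin n → ℝ) × (Fin n → ℝ)) :
    Fin n → ℂ :=
  T.mulVec (cvec h.1) + cvec h.2

def uVecStar {n : ℕ} (T : Matrix (Fin n) (Fin n) ℂ) (h : (Fin n → ℝ) × (Fin n → ℝ)) :
    Fin n → ℂ :=
  (T.map (starRingEnd ℂ)).mulVec (cvec h.1) + cvec h.2

/-- `H_c(h̲,h̲) = (h̲ − 2i Im c)ᵗ(Im T)⁻¹(h̲* − 2i Im c) + 4i h₁ᵗ(Re c)`. -/
def HcForm {n : ℕ} (T : Matrix (Fin n) (Fin n) ℂ) (c : Fin n → ℂ)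
    (h : (Fin n → ℝ) × (Fin n → ℝ)) : ℂ :=
  dotProduct (uVec T h - fun i => 2 * Complex.I * ((c i).im : ℂ))
      ((((T.map Complex.im)⁻¹).map (fun r => (r : ℂ))).mulVec
        (uVecStar T h - fun i => 2 * Complex.I * ((c i).im : ℂ))) +
    4 * Complex.I * dotProduct (cvec h.1) (fun i => ((c i).re : ℂ))

/-- The shifted Gaussian theta vector `f_{T,c}(x₁) = exp(πi x₁ᵗTx₁ + 2πi cᵗx₁)`. -/
def gaussianShift {n : ℕ} (T : Matrix (Fin n) (Fin n) ℂ) (c : Fin n → ℂ)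
    (x : Fin n → ℝ) : ℂ :=
  Complex.exp ((π : ℂ) * Complex.I * dotProduct (cvec x) (T.mulVec (cvec x)) +
    2 * (π : ℂ) * Complex.I * dotProduct c (cvec x))

/-- The Heisenberg representation. -/
def heisRep {n : ℕ} (y : (Fin n → ℝ) × (Fin n → ℝ)) (f : (Fin n → ℝ) → ℂ)
    (x₁ : Fin n → ℝ) : ℂ :=
  Complex.exp (2 * (π : ℂ) * Complex.I * dotProduct (cvec x₁) (cvec y.2) +
    (π : ℂ) * Complex.I * dotProduct (cvec y.1) (cvec y.2)) * f (x₁ + y.1)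

/-!
Shifted Gaussians are closed under the Heisenberg representation (up to a scalar), complex
conjugation and products. For symmetric `T`,
`π_h f_{T,c} = exp(πi h₁ᵗ(h̲ + 2c)) f_{T, c + h̲}`, so `f_{T,c} · conj(π_h f_{T,c})` is
`exp(−πi h₁ᵗ(h̲* + 2 conj c)) f_{2i Im T, −w}` with `w = h̲* − 2i Im c`. Factoring the positive
definite matrix `2 Im T` as `MᵀM` and substituting `y = Mx` gives
`∫ f_{2i Im T, −w} = (2ⁿ det(Im T))^{-1/2} exp(−(π/2) wᵗ(Im T)⁻¹w)`. Finally
`h̲ = h̲* + 2i (Im T)h₁` turns the sum of the two exponents into `−(π/2) H_c(h̲,h̲)`.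
-/

open scoped ComplexConjugate

section LinearAlgebra

variable {ι : Type*} [Fintype ι] [DecidableEq ι]

open scoped ComplexOrder MatrixOrder in
theorem exists_isUnit_eq_conjTranspose_mul_self {𝕜 : Type*} [RCLike 𝕜] {A : Matrix ι ι 𝕜}
    (hA : A.PosDef) : ∃ M : Matrix ι ι 𝕜, IsUnit M ∧ A = Mᴴ * M := by
  obtain ⟨M, rfl⟩ := CStarAlgebra.nonneg_iff_eq_star_mul_self.mp hA.posSemidef.nonneg
  exact ⟨M, isUnit_of_mul_isUnit_right hA.isUnit, rfl⟩

theorem map_nonsing_inv_mul_map {R S : Type*} [CommRing R] [CommRing S] (f : R →+* S)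
    {A : Matrix ι ι R} (hA : IsUnit A.det) : A⁻¹.map f * A.map f = 1 := by
  rw [← Matrix.map_mul, nonsing_inv_mul A hA, Matrix.map_one f (map_zero f) (map_one f)]

theorem map_nonsing_inv_smul {K L : Type*} [Field K] [Field L] (f : K →+* L) {a : K} (ha : a ≠ 0)
    {A : Matrix ι ι K} (hA : IsUnit A.det) : (a • A)⁻¹.map f = (f a)⁻¹ • A⁻¹.map f := by
  let := invertibleOfNonzero ha
  rw [inv_smul A a hA, invOf_eq_inv, ← map_inv₀]
  exact Matrix.map_smulₛₗ f f _ (fun _ => map_mul f _ _) _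

theorem sub_map_conj {m n : Type*} (T : Matrix m n ℂ) :
    T - T.map conj = (2 * I) • (T.map im).map ofRealHom := by
  ext i j
  simp [sub_conj, mul_right_comm]

end LinearAlgebra

section GaussianIntegral

variable {ι : Type*} [Fintype ι] [DecidableEq ι]

theorem integral_comp_mulVec {E : Type*} [NormedAddCommGroup E] [NormedSpace ℝ E]
    {M : Matrix ι ι ℝ} (hM : M.det ≠ 0) (f : (ι → ℝ) → E) :
    ∫ x, f (M *ᵥ x) = |M.det|⁻¹ • ∫ y, f y := by
  have hemb : MeasurableEmbedding (toLin' M) :=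
    (toLin' M).continuous_of_finiteDimensional.measurableEmbedding
      (mulVec_injective_of_isUnit (M.isUnit_iff_isUnit_det.mpr hM.isUnit))
  calc ∫ x, f (M *ᵥ x) = ∫ y, f y ∂Measure.map (toLin' M) volume := (hemb.integral_map f).symm
    _ = |M.det|⁻¹ • ∫ y, f y := by
      rw [Real.map_matrix_volume_pi_eq_smul_volume_pi hM, integral_smul_measure,
        ENNReal.toReal_ofReal (abs_nonneg _), abs_inv]

theorem integral_cexp_neg_mul_dotProduct_mulVec_add {b : ℂ} (hb : 0 < b.re) {A : Matrix ι ι ℝ}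
    (hA : A.PosDef) (c : ι → ℂ) :
    ∫ x : ι → ℝ, cexp (-b * (x ⬝ᵥ A *ᵥ x : ℝ) + ∑ i, c i * x i) =
      (√A.det)⁻¹ * ((π / b) ^ (Fintype.card ι / 2 : ℂ) *
        cexp ((c ⬝ᵥ A⁻¹.map ofRealHom *ᵥ c) / (4 * b))) := by
  obtain ⟨M, hM, rfl⟩ := exists_isUnit_eq_conjTranspose_mul_self hA
  rw [conjTranspose_eq_transpose_of_trivial]
  replace hM : IsUnit M.det := M.isUnit_iff_isUnit_det.mp hM
  set c' : ι → ℂ := c ᵥ* M⁻¹.map ofRealHom with hc'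
  have hquadratic (x : ι → ℝ) :
      ((x ⬝ᵥ (Mᵀ * M) *ᵥ x : ℝ) : ℂ) = ∑ i, ((M *ᵥ x) i : ℂ) ^ 2 := by
    rw [← mulVec_mulVec, dotProduct_transpose_mulVec]
    simp only [dotProduct, ofReal_sum, ofReal_mul, pow_two]
  have hlinear (x : ι → ℝ) : ∑ i, c i * x i = ∑ i, c' i * (M *ᵥ x) i := by
    have hcast : (fun i => ((M *ᵥ x) i : ℂ)) = M.map ofRealHom *ᵥ fun i => (x i : ℂ) :=
      funext fun i => ofRealHom.map_mulVec M x i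
    change (c ⬝ᵥ fun i => (x i : ℂ)) = c' ⬝ᵥ fun i => ((M *ᵥ x) i : ℂ)
    rw [hcast, hc', ← dotProduct_mulVec, mulVec_mulVec, map_nonsing_inv_mul_map _ hM,
      one_mulVec]
  have hdual : ∑ i, c' i ^ 2 = c ⬝ᵥ (Mᵀ * M)⁻¹.map ofRealHom *ᵥ c := by
    have hinv : (Mᵀ * M)⁻¹.map ofRealHom = M⁻¹.map ofRealHom * (M⁻¹.map ofRealHom)ᵀ := by
      rw [Matrix.mul_inv_rev, ← transpose_nonsing_inv, Matrix.map_mul, transpose_map]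
    rw [hinv, ← mulVec_mulVec, dotProduct_mulVec, mulVec_transpose]
    simp only [dotProduct, pow_two, c']
  have hsqrt : √(Mᵀ * M).det = |M.det| := by
    rw [det_mul, det_transpose, Real.sqrt_mul_self_eq_abs]
  simp_rw [hquadratic, hlinear]
  rw [integral_comp_mulVec hM.ne_zero
      fun y : ι → ℝ => cexp (-b * ∑ i, (y i : ℂ) ^ 2 + ∑ i, c' i * y i),
    GaussianFourier.integral_cexp_neg_mul_sum_add hb, hdual, hsqrt, real_smul, ofReal_inv]

end GaussianIntegral

section GaussianShift

/-- The vector `h̲* − 2i Im c`, which is both the right-hand argument of `H_c` and, up to sign, the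
linear term of the Gaussian integrand. -/
def imShiftedUVecStar {n : ℕ} (T : Matrix (Fin n) (Fin n) ℂ) (c : Fin n → ℂ)
    (h : (Fin n → ℝ) × (Fin n → ℝ)) : Fin n → ℂ :=
  uVecStar T h - fun i => 2 * I * ((c i).im : ℂ)

variable {n : ℕ} (T T' : Matrix (Fin n) (Fin n) ℂ) (c c' : Fin n → ℂ)
  (h : (Fin n → ℝ) × (Fin n → ℝ)) (x : Fin n → ℝ)

theorem integral_gaussianShift_I_smul {A : Matrix (Fin n) (Fin n) ℝ} (hA : A.PosDef) :
    ∫ x, gaussianShift (I • A.map ofRealHom) c x =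
      (√A.det)⁻¹ * cexp (-π * (c ⬝ᵥ A⁻¹.map ofRealHom *ᵥ c)) := by
  have hexp (x : Fin n → ℝ) : gaussianShift (I • A.map ofRealHom) c x =
      cexp (-π * (x ⬝ᵥ A *ᵥ x : ℝ) + ∑ i, ((2 * π * I) • c) i * x i) := by
    have hquad : cvec x ⬝ᵥ A.map ofRealHom *ᵥ cvec x = (x ⬝ᵥ A *ᵥ x : ℝ) := by
      simp [cvec, dotProduct, mulVec]
    change _ = cexp (_ + ((2 * π * I) • c) ⬝ᵥ cvec x)
    rw [gaussianShift, smul_mulVec, dotProduct_smul, hquad, smul_dotProduct, smul_eq_mul,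
      smul_eq_mul]
    congr 1
    linear_combination (π * (x ⬝ᵥ A *ᵥ x : ℝ)) * I_sq
  have hpi : (π : ℂ) ≠ 0 := ofReal_ne_zero.mpr pi_ne_zero
  simp_rw [hexp]
  rw [integral_cexp_neg_mul_dotProduct_mulVec_add (by simpa using pi_pos) hA, div_self hpi,
    one_cpow, one_mul, mulVec_smul, smul_dotProduct, dotProduct_smul, smul_eq_mul, smul_eq_mul]
  congr 2
  field_simp
  linear_combination (4 * (c ⬝ᵥ A⁻¹.map ofRealHom *ᵥ c)) * I_sq

theorem gaussianShift_mul_gaussianShift :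
    gaussianShift T c x * gaussianShift T' c' x = gaussianShift (T + T') (c + c') x := by
  simp only [gaussianShift, ← Complex.exp_add, add_mulVec, dotProduct_add, add_dotProduct]
  congr 1
  ring

theorem conj_gaussianShift :
    conj (gaussianShift T c x) = gaussianShift (-T.map conj) (-star c) x := by
  simp only [gaussianShift, ← Complex.exp_conj, neg_mulVec, dotProduct_neg, neg_dotProduct]
  simp [cvec, dotProduct, mulVec, map_ofNat]

theorem star_uVec : star (uVec T h) = uVecStar T h := by
  ext i
  simp [uVec, uVecStar, cvec, dotProduct, mulVec]

variable {T}

theorem heisRep_gaussianShift (hT : T.IsSymm) :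
    heisRep h (gaussianShift T c) x =
      cexp (π * I * (cvec h.1 ⬝ᵥ (uVec T h + 2 • c))) * gaussianShift T (c + uVec T h) x := by
  have hadd : cvec (x + h.1) = cvec x + cvec h.1 := funext fun i => ofReal_add _ _
  have hcross : cvec h.1 ⬝ᵥ T *ᵥ cvec x = cvec x ⬝ᵥ T *ᵥ cvec h.1 := by
    rw [← dotProduct_transpose_mulVec, hT.eq]
  simp only [heisRep, gaussianShift, uVec, ← Complex.exp_add, hadd, mulVec_add, dotProduct_add,
    add_dotProduct, dotProduct_smul, hcross, dotProduct_comm _ (cvec x), dotProduct_comm c]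
  congr 1
  ring

theorem gaussianShift_mul_conj_heisRep (hT : T.IsSymm) :
    gaussianShift T c x * conj (heisRep h (gaussianShift T c) x) =
      cexp (-π * I * (cvec h.1 ⬝ᵥ (uVecStar T h + 2 • star c))) *
        gaussianShift (I • ((2 : ℝ) • T.map im).map ofRealHom) (-imShiftedUVecStar T c h) x := by
  have hmatrix : T + -T.map conj = I • ((2 : ℝ) • T.map im).map ofRealHom := by
    rw [← sub_eq_add_neg, sub_map_conj]
    ext i j
    simp [mul_left_comm, mul_assoc]
  have hvector : c + -star (c + uVec T h) = -imShiftedUVecStar T c h := by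
    rw [star_add, star_uVec, imShiftedUVecStar]
    ext i
    have hi : c i - star (c i) = 2 * I * (c i).im := by
      simpa [mul_right_comm] using sub_conj (c i)
    simp only [Pi.add_apply, Pi.neg_apply, Pi.sub_apply, Pi.star_apply]
    linear_combination hi
  have hscalar : conj (cexp (π * I * (cvec h.1 ⬝ᵥ (uVec T h + 2 • c)))) =
      cexp (-π * I * (cvec h.1 ⬝ᵥ (uVecStar T h + 2 • star c))) := by
    rw [← star_uVec, ← Complex.exp_conj]
    simp [cvec, dotProduct, map_ofNat]
  rw [heisRep_gaussianShift c h x hT, map_mul, hscalar, conj_gaussianShift, mul_left_comm,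
    gaussianShift_mul_gaussianShift, hmatrix, hvector]

theorem HcForm_eq_dotProduct_add (hT : T.IsSymm) (hdet : IsUnit (T.map im).det) :
    HcForm T c h =
      imShiftedUVecStar T c h ⬝ᵥ (T.map im)⁻¹.map ofRealHom *ᵥ imShiftedUVecStar T c h +
        2 * I * (cvec h.1 ⬝ᵥ (uVecStar T h + 2 • star c)) := by
  set w := imShiftedUVecStar T c h with hw
  set B := (T.map im).map ofRealHom with hB
  have hu : uVec T h - (fun i => 2 * I * ((c i).im : ℂ)) = w + (2 * I) • B *ᵥ cvec h.1 := by
    rw [hw, imShiftedUVecStar, uVec, uVecStar]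
    conv_lhs => rw [eq_add_of_sub_eq' (sub_map_conj T), add_mulVec, smul_mulVec]
    abel
  have hcross : B *ᵥ cvec h.1 ⬝ᵥ (T.map im)⁻¹.map ofRealHom *ᵥ w = cvec h.1 ⬝ᵥ w := by
    have hB_symm : Bᵀ = B := by rw [hB, ← transpose_map, ← transpose_map, hT.eq]
    rw [← hB_symm, mulVec_transpose, ← dotProduct_mulVec, mulVec_mulVec,
      mul_eq_one_comm.mp (map_nonsing_inv_mul_map _ hdet), one_mulVec]
  have hre : w + 2 • (fun i => ((c i).re : ℂ)) = uVecStar T h + 2 • star c := by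
    rw [hw, imShiftedUVecStar]
    ext i
    simp [Complex.ext_iff, sub_eq_add_neg]
  change (uVec T h - _) ⬝ᵥ (T.map im)⁻¹.map ofRealHom *ᵥ w + _ = _
  rw [hu, add_dotProduct, smul_dotProduct, hcross, ← hre, dotProduct_add, dotProduct_smul]
  simp only [smul_eq_mul, nsmul_eq_mul, Nat.cast_ofNat]
  ring

end GaussianShift

/-- `⟨f_{T,c}, π_h f_{T,c}⟩ = (2ⁿ det(Im T))^{-1/2} · exp(−(π/2) H_c(h̲,h̲))`. -/
theorem gaussianShift_inner_heisRep {n : ℕ} (T : Matrix (Fin n) (Fin n) ℂ)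
    (hsymm : T.IsSymm) (hpos : (T.map Complex.im).PosDef)
    (c : Fin n → ℂ) (h : (Fin n → ℝ) × (Fin n → ℝ)) :
    ∫ x : Fin n → ℝ,
        gaussianShift T c x * (starRingEnd ℂ) (heisRep h (gaussianShift T c) x) =
      ((Real.sqrt (2 ^ n * (T.map Complex.im).det))⁻¹ : ℂ) *
        Complex.exp (-((π : ℂ) / 2) * HcForm T c h) := by
  have hdet : IsUnit (T.map im).det := hpos.det_pos.ne'.isUnit
  set w := imShiftedUVecStar T c h
  have hquad : -w ⬝ᵥ ((2 : ℝ) • T.map im)⁻¹.map ofRealHom *ᵥ -w =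
      (w ⬝ᵥ (T.map im)⁻¹.map ofRealHom *ᵥ w) / 2 := by
    rw [map_nonsing_inv_smul ofRealHom two_ne_zero hdet, mulVec_neg, neg_dotProduct_neg,
      smul_mulVec, dotProduct_smul, smul_eq_mul, map_ofNat, div_eq_inv_mul]
  simp_rw [gaussianShift_mul_conj_heisRep c h _ hsymm]
  rw [integral_const_mul, integral_gaussianShift_I_smul _ (hpos.smul two_pos), hquad, det_smul,
    Fintype.card_fin, HcForm_eq_dotProduct_add c h hsymm hdet, mul_left_comm,
    ← Complex.exp_add, ofReal_inv]
  congr 2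
  ring

end
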